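/- arXiv:2510.02113 — 2 statements merged into one kernel-verified Lean document; each statement's English description precedes it below -/
import Mathlib

section
/- Let G be a DAG containing no active cycle, let K ⊆ V, and let T = x_0 ⇄ x_1 ⇄ ⋯ ⇄ x_{n+1} be a trail all of whose interior nodes x_1, …, x_n lie in K. If T is a shortest trail between x_0 and x_{n+1} activated by the empty set among trails whose interior nodes all lie in K, then (i) ch(x_0) ∩ ch(x_{n+1}) ⊆ ⋂_{i=1}^{n} ch(x_i), and (ii) for every i = 1, …, n, x_i ∉ ch(x_0) ∩ ch(x_{n+1}). -/
open scoped Classical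

/-- `E` is the arc relation of a (finite) directed acyclic graph: there are no
directed cycles (hence also no loops and no pairs of opposite arcs). -/
def IsDAG {V : Type*} (E : V → V → Prop) : Prop :=
  ∀ v : V, ¬ Relation.TransGen E v v

/-- `d` is a descendant of `v`: there is a (nonempty) directed path from `v` to `d`. -/
def Desc {V : Type*} (E : V → V → Prop) (v d : V) : Prop :=
  Relation.TransGen E v d

/-- A trail: a sequence of `len + 1` pairwise distinct nodes
`f 0, f 1, …, f len`, consecutive ones joined by an arc of `E`
in one of the two possible directions.  Its length is `len`. -/
structure Trail (V : Type*) (E : V → V → Prop) where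
  len : ℕ
  f : ℕ → V
  arcs : ∀ i, i < len → E (f i) (f (i + 1)) ∨ E (f (i + 1)) (f i)
  inj : ∀ i, i ≤ len → ∀ j, j ≤ len → f i = f j → i = j

namespace Trail

variable {V : Type*} {E : V → V → Prop}

/-- The trail has a converging connection at the interior index `i`:
`f (i-1) → f i ← f (i+1)`. -/
def ConvAt (T : Trail V E) (i : ℕ) : Prop :=
  0 < i ∧ i < T.len ∧ E (T.f (i - 1)) (T.f i) ∧ E (T.f (i + 1)) (T.f i)

/-- The trail is activated by `Z`: every interior converging node is in `Z` or has a
descendant in `Z`, and every interior non-converging node is not in `Z`. -/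
def ActivatedBy (T : Trail V E) (Z : Set V) : Prop :=
  ∀ i, 0 < i → i < T.len →
    (T.ConvAt i → (T.f i ∈ Z ∨ ∃ d ∈ Z, Desc E (T.f i) d)) ∧
    (¬ T.ConvAt i → T.f i ∉ Z)

/-- The trail has a chord: an arc of `E` between two non-consecutive nodes. -/
def HasChord (T : Trail V E) : Prop :=
  ∃ i j, i + 1 < j ∧ j ≤ T.len ∧ (E (T.f i) (T.f j) ∨ E (T.f j) (T.f i))

end Trail

/-- `E` contains an active cycle: a closed trail
`v ← x 0 ⇄ x 1 ⇄ ⋯ ⇄ x n ⇄ x (n+1) → v` (so `w = x 0` and `z = x (n+1)` are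
distinct parents of `v`), with `n ≥ 1`, such that the trail
`x 0 ⇄ ⋯ ⇄ x (n+1)` has no converging connection and the closed trail has no chords. -/
def HasActiveCycle {V : Type*} (E : V → V → Prop) : Prop :=
  ∃ (v : V) (n : ℕ) (x : ℕ → V),
    1 ≤ n ∧
    E (x 0) v ∧ E (x (n + 1)) v ∧
    (∀ i, i ≤ n + 1 → x i ≠ v) ∧
    (∀ i, i ≤ n + 1 → ∀ j, j ≤ n + 1 → x i = x j → i = j) ∧
    (∀ i, i < n + 1 → E (x i) (x (i + 1)) ∨ E (x (i + 1)) (x i)) ∧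
    (∀ i, 0 < i → i < n + 1 → ¬ (E (x (i - 1)) (x i) ∧ E (x (i + 1)) (x i))) ∧
    (∀ i j, i + 1 < j → j ≤ n + 1 → ¬ (i = 0 ∧ j = n + 1) →
      ¬ E (x i) (x j) ∧ ¬ E (x j) (x i)) ∧
    (∀ i, 1 ≤ i → i ≤ n → ¬ E v (x i) ∧ ¬ E (x i) v)

namespace Trail

variable {V : Type*} {E : V → V → Prop}

/-- A trail is activated by `∅` exactly when it has no converging connection. -/
theorem activatedBy_empty_iff (T : Trail V E) :
    T.ActivatedBy (∅ : Set V) ↔ ∀ i, ¬ T.ConvAt i := by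
  constructor
  · intro h i hi
    simpa using (h i hi.1 hi.2.1).1 hi
  · intro h i _ _
    exact ⟨fun hi => (h i hi).elim, fun _ => Set.notMem_empty _⟩

theorem transGen_of_forward (T : Trail V E) (hT : ∀ i, ¬ T.ConvAt i) {i : ℕ}
    (h : E (T.f i) (T.f (i + 1))) {j : ℕ} (hij : i < j) (hj : j ≤ T.len) :
    Relation.TransGen E (T.f i) (T.f j) := by
  have key : ∀ d, i + d + 1 ≤ T.len → E (T.f (i + d)) (T.f (i + d + 1)) ∧
      Relation.TransGen E (T.f i) (T.f (i + d + 1)) := by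
    intro d
    induction d with
    | zero => exact fun _ => ⟨h, .single h⟩
    | succ d ih =>
      intro hd
      obtain ⟨h₁, h₂⟩ := ih (by omega)
      have h₃ : E (T.f (i + d + 1)) (T.f (i + d + 1 + 1)) :=
        (T.arcs (i + d + 1) (by omega)).resolve_right fun h₄ =>
          hT (i + d + 1) ⟨by omega, by omega, h₁, h₄⟩
      exact ⟨h₃, h₂.tail h₃⟩
  obtain ⟨d, rfl⟩ := Nat.exists_eq_add_of_lt hij
  exact (key d hj).2

theorem transGen_of_backward (T : Trail V E) (hT : ∀ i, ¬ T.ConvAt i) {j : ℕ}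
    (hj : j < T.len) (h : E (T.f (j + 1)) (T.f j)) {i : ℕ} (hij : i ≤ j) :
    Relation.TransGen E (T.f (j + 1)) (T.f i) := by
  induction j with
  | zero => obtain rfl : i = 0 := by omega
            exact .single h
  | succ j ih =>
    rcases Nat.lt_or_ge j i with hji | hji
    · obtain rfl : i = j + 1 := by omega
      exact .single h
    · have h' : E (T.f (j + 1)) (T.f j) :=
        (T.arcs j (by omega)).resolve_left fun h₄ =>
          hT (j + 1) ⟨by omega, hj, h₄, h⟩
      exact .head h (ih (by omega) h' hji)

/-- On a trail without converging connections, every node is an ancestor of an endpoint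
(or is an endpoint). -/
theorem reflTransGen_endpoint (T : Trail V E) (hT : ∀ i, ¬ T.ConvAt i) {i : ℕ}
    (hi : i ≤ T.len) :
    Relation.ReflTransGen E (T.f i) (T.f 0) ∨
      Relation.ReflTransGen E (T.f i) (T.f T.len) := by
  rcases Nat.eq_zero_or_pos i with rfl | h₀
  · exact .inl .refl
  rcases hi.eq_or_lt with rfl | h₁
  · exact .inr .refl
  obtain ⟨k, rfl⟩ : ∃ k, i = k + 1 := ⟨i - 1, by omega⟩
  rcases T.arcs k (by omega) with h | h
  · refine .inr (T.transGen_of_forward hT ?_ h₁ le_rfl).to_reflTransGen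
    exact (T.arcs (k + 1) h₁).resolve_right fun h₂ => hT (k + 1) ⟨h₀, h₁, h, h₂⟩
  · exact .inl (T.transGen_of_backward hT (by omega) h (Nat.zero_le k)).to_reflTransGen

/-- The trail that shortcuts `T` along an arc between `T.f i` and `T.f j`. -/
def shortcut (T : Trail V E) (i j : ℕ) (hij : i < j) (hj : j ≤ T.len)
    (h : E (T.f i) (T.f j) ∨ E (T.f j) (T.f i)) : Trail V E where
  len := T.len - (j - i - 1)
  f k := if k ≤ i then T.f k else T.f (k + (j - i - 1))
  arcs k hk := by
    rcases Nat.lt_trichotomy k i with hki | rfl | hki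
    · rw [if_pos hki.le, if_pos (by omega)]
      exact T.arcs k (by omega)
    · rw [if_pos le_rfl, if_neg (by omega), show k + 1 + (j - k - 1) = j by omega]
      exact h
    · rw [if_neg (by omega), if_neg (by omega), Nat.add_right_comm]
      exact T.arcs _ (by omega)
  inj k hk l hl hkl := by
    split_ifs at hkl <;> have := T.inj _ (by omega) _ (by omega) hkl <;> omega

theorem shortcut_not_convAt (hdag : IsDAG E) (T : Trail V E) (hT : ∀ i, ¬ T.ConvAt i)
    {i j : ℕ} (hij : i < j) (hj : j ≤ T.len)
    (h : E (T.f i) (T.f j) ∨ E (T.f j) (T.f i)) (k : ℕ) :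
    ¬ (T.shortcut i j hij hj h).ConvAt k := by
  rintro ⟨hk₀, hk, h₁, h₂⟩
  obtain ⟨k, rfl⟩ : ∃ l, k = l + 1 := ⟨k - 1, by omega⟩
  simp only [shortcut, Nat.add_sub_cancel] at hk h₁ h₂
  rcases Nat.lt_trichotomy (k + 1) i with hki | rfl | hki
  · rw [if_pos (by omega), if_pos (by omega)] at h₁ h₂
    exact hT (k + 1) ⟨by omega, by omega, h₁, h₂⟩
  · rw [if_pos (by omega), if_pos le_rfl] at h₁
    rw [if_neg (by omega), if_pos le_rfl, show k + 1 + 1 + (j - (k + 1) - 1) = j by omega] at h₂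
    have h₃ : E (T.f (k + 1)) (T.f (k + 1 + 1)) :=
      (T.arcs (k + 1) (by omega)).resolve_right fun h₃ =>
        hT (k + 1) ⟨by omega, by omega, h₁, h₃⟩
    exact hdag _ ((T.transGen_of_forward hT h₃ hij hj).tail h₂)
  · rcases Nat.lt_or_ge i k with hik | hik
    · rw [if_neg (by omega), if_neg (by omega)] at h₁ h₂
      rw [Nat.add_right_comm] at h₁
      rw [Nat.add_right_comm (k + 1), Nat.add_right_comm k] at h₂
      exact hT (k + (j - i - 1) + 1) ⟨by omega, by omega, h₁, h₂⟩
    · obtain rfl : k = i := by omega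
      rw [if_pos le_rfl, if_neg (by omega), show k + 1 + (j - k - 1) = j by omega] at h₁
      rw [if_neg (by omega), if_neg (by omega), show k + 1 + (j - k - 1) = j by omega,
        show k + 1 + 1 + (j - k - 1) = j + 1 by omega] at h₂
      obtain ⟨l, rfl⟩ : ∃ l, j = l + 1 := ⟨j - 1, by omega⟩
      have h₃ : E (T.f (l + 1)) (T.f l) :=
        (T.arcs l (by omega)).resolve_left fun h₃ =>
          hT (l + 1) ⟨by omega, by omega, h₃, h₂⟩
      exact hdag _ ((T.transGen_of_backward hT hj h₃ (by omega)).tail h₁)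

/-- A shortest trail without converging connections, among those with interior nodes in `K`,
has no chord. -/
theorem not_hasChord_of_shortest (hdag : IsDAG E) {K : Set V} (T : Trail V E)
    (hT : ∀ i, ¬ T.ConvAt i) (hK : ∀ i, 0 < i → i < T.len → T.f i ∈ K)
    (hmin : ∀ T' : Trail V E, T'.f 0 = T.f 0 → T'.f T'.len = T.f T.len →
      T'.ActivatedBy (∅ : Set V) → (∀ i, 0 < i → i < T'.len → T'.f i ∈ K) →
      T.len ≤ T'.len) : ¬ T.HasChord := by
  rintro ⟨i, j, hij, hj, h⟩
  have hlt : i < j := by omega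
  have := hmin (T.shortcut i j hlt hj h) (by simp [shortcut])
    (by
      simp only [shortcut]
      rw [if_neg (by omega), show T.len - (j - i - 1) + (j - i - 1) = T.len by omega])
    ((activatedBy_empty_iff _).2 (T.shortcut_not_convAt hdag hT hlt hj h))
    (by
      intro k hk₀ hk
      simp only [shortcut] at hk ⊢
      split_ifs <;> exact hK _ (by omega) (by omega))
  simp only [shortcut] at this
  omega

end Trail

/-- A natural number where `P` fails, lying between two where it holds, lies in a gap of `P`. -/
theorem exists_gap {P : ℕ → Prop} {i n : ℕ} (hP₀ : P 0) (hPn : P n) (hin : i ≤ n)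
    (hi : ¬ P i) :
    ∃ a b, a < i ∧ i < b ∧ b ≤ n ∧ P a ∧ P b ∧ ∀ k, a < k → k < b → ¬ P k := by
  classical
  have hex : ∃ b, i ≤ b ∧ P b := ⟨n, hin, hPn⟩
  have ha := Nat.findGreatest_spec (Nat.zero_le i) hP₀
  refine ⟨Nat.findGreatest P i, Nat.find hex, ?_, ?_, Nat.find_min' hex ⟨hin, hPn⟩, ha,
    (Nat.find_spec hex).2, fun k hak hkb hk => ?_⟩
  · exact (Nat.findGreatest_le i).lt_of_ne fun h => hi (h ▸ ha)
  · exact (Nat.find_spec hex).1.lt_of_ne fun h => hi (by rw [h]; exact (Nat.find_spec hex).2)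
  · rcases Nat.lt_or_ge i k with h | h
    · exact Nat.find_min hex hkb ⟨h.le, hk⟩
    · exact Nat.findGreatest_is_greatest hak h hk

/-- Statement 2 generalized to trails whose interior nodes all lie in a
subset `K`, shortest among such trails. -/
theorem shortest_empty_activated_trail_common_children_in_K
    {V : Type*} [Fintype V] (E : V → V → Prop) (hdag : IsDAG E)
    (hnac : ¬ HasActiveCycle E) (K : Set V) (T : Trail V E) (hlen : 1 ≤ T.len)
    (hact : T.ActivatedBy (∅ : Set V))
    (hK : ∀ i, 0 < i → i < T.len → T.f i ∈ K)
    (hmin : ∀ T' : Trail V E, T'.f 0 = T.f 0 → T'.f T'.len = T.f T.len →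
      T'.ActivatedBy (∅ : Set V) → (∀ i, 0 < i → i < T'.len → T'.f i ∈ K) →
      T.len ≤ T'.len) :
    (∀ v : V, E (T.f 0) v → E (T.f T.len) v →
      ∀ i, 0 < i → i < T.len → E (T.f i) v) ∧
    (∀ i, 0 < i → i < T.len → ¬ (E (T.f 0) (T.f i) ∧ E (T.f T.len) (T.f i))) := by
  have hT := T.activatedBy_empty_iff.1 hact
  have hchord := T.not_hasChord_of_shortest hdag hT hK hmin
  have hcommon : ∀ i, 0 < i → i < T.len →
      ¬ (E (T.f 0) (T.f i) ∧ E (T.f T.len) (T.f i)) := by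
    rintro i hi₀ hi ⟨h₁, h₂⟩
    have hi₁ : i = 1 := by
      by_contra hne
      exact hchord ⟨0, i, by omega, hi.le, .inl h₁⟩
    have hi₂ : T.len = i + 1 := by
      by_contra hne
      exact hchord ⟨i, T.len, by omega, le_rfl, .inr h₂⟩
    subst hi₁
    exact hT 1 ⟨one_pos, hi, h₁, hi₂ ▸ h₂⟩
  refine ⟨fun v hv₀ hv₁ i hi₀ hi => by_contra fun hiv => hnac ?_, hcommon⟩
  have hdesc : ∀ k, k ≤ T.len → ¬ Relation.TransGen E v (T.f k) := fun k hk h =>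
    (T.reflTransGen_endpoint hT hk).elim
      (fun h' => hdag v ((h.trans_left h').tail hv₀))
      (fun h' => hdag v ((h.trans_left h').tail hv₁))
  have hne : ∀ k, k ≤ T.len → T.f k ≠ v := by
    rintro k hk rfl
    rcases Nat.eq_zero_or_pos k with rfl | hk₀
    · exact hdag _ (.single hv₀)
    rcases hk.eq_or_lt with rfl | hk₁
    · exact hdag _ (.single hv₁)
    exact hcommon k hk₀ hk₁ ⟨hv₀, hv₁⟩
  obtain ⟨a, b, hai, hib, hb, hav, hbv, hgap⟩ :=
    exists_gap (P := fun k => E (T.f k) v) hv₀ hv₁ hi.le hiv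
  obtain ⟨n, rfl⟩ : ∃ n, b = a + (n + 1) := ⟨b - a - 1, by omega⟩
  refine ⟨v, n, fun k => T.f (a + k), by omega, hav, hbv, fun k hk => hne _ (by omega),
    fun k hk l hl h => ?_, fun k hk => T.arcs (a + k) (by omega), ?_, ?_, ?_⟩
  · have := T.inj _ (by omega) _ (by omega) h
    omega
  · rintro k hk₀ hk ⟨h₁, h₂⟩
    dsimp only at h₁ h₂
    rw [← Nat.add_sub_assoc hk₀] at h₁
    exact hT (a + k) ⟨by omega, by omega, h₁, h₂⟩
  · exact fun k l hkl hl _ =>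
      ⟨fun h => hchord ⟨a + k, a + l, by omega, by omega, .inl h⟩,
        fun h => hchord ⟨a + k, a + l, by omega, by omega, .inr h⟩⟩
  · exact fun k hk₀ hk =>
      ⟨fun h => hdesc (a + k) (by omega) (.single h), hgap (a + k) (by omega) (by omega)⟩
end

section
/- Let G be a DAG and let K ⊆ V be a set with local relationships. Then for every pair of distinct nodes v_1, v_2 ∈ K, either v_1 and v_2 are connected in K (joined by a trail all of whose nodes lie in K) or {v_1} and {v_2} are d-separated by the empty set. -/
open scoped Classical

/-- `K` has local relationships: whenever two nodes of `K` are joined by a trail with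
no converging connection all of whose interior nodes avoid `K`, they are adjacent. -/
def LocalRel {V : Type*} (E : V → V → Prop) (K : Set V) : Prop :=
  ∀ T : Trail V E, 1 ≤ T.len → T.f 0 ∈ K → T.f T.len ∈ K →
    (∀ i, 0 < i → i < T.len → T.f i ∉ K) →
    (∀ i, 0 < i → i < T.len → ¬ T.ConvAt i) →
    E (T.f 0) (T.f T.len) ∨ E (T.f T.len) (T.f 0)

/-- `S` d-separates `A` and `B`: every trail from a node of `A` to a node of `B`
is blocked by (i.e. not activated by) `S`. -/
def DSep {V : Type*} (E : V → V → Prop) (A B S : Set V) : Prop :=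
  ∀ T : Trail V E, T.f 0 ∈ A → T.f T.len ∈ B → ¬ T.ActivatedBy S

/-- `S` is connected: any two distinct nodes of `S` are joined by a trail all of
whose nodes lie in `S`. -/
def ConnectedIn {V : Type*} (E : V → V → Prop) (S : Set V) : Prop :=
  ∀ v1 ∈ S, ∀ v2 ∈ S, v1 ≠ v2 → ∃ T : Trail V E,
    T.f 0 = v1 ∧ T.f T.len = v2 ∧ ∀ i, i ≤ T.len → T.f i ∈ S

/-- The graph on `V` whose edges are the arcs of `E` between nodes of `K`, with
directions forgotten. -/
def inducedSkeleton {V : Type*} (E : V → V → Prop) (K : Set V) : SimpleGraph V where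
  Adj x y := x ≠ y ∧ x ∈ K ∧ y ∈ K ∧ (E x y ∨ E y x)
  symm := ⟨fun _ _ h => ⟨h.1.symm, h.2.2.1, h.2.1, h.2.2.2.symm⟩⟩
  loopless := ⟨fun _ h => h.1 rfl⟩

/-- Reachability in the skeleton induced on `K` yields a trail within `K`. -/
lemma exists_trail_of_reachable {V : Type*} {E : V → V → Prop} {K : Set V} {v w : V}
    (hv : v ∈ K) (h : (inducedSkeleton E K).Reachable v w) :
    ∃ T : Trail V E, T.f 0 = v ∧ T.f T.len = w ∧ ∀ i, i ≤ T.len → T.f i ∈ K := by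
  obtain ⟨p, hp⟩ := h.exists_isPath
  refine ⟨⟨p.length, p.getVert, fun i hi => (p.adj_getVert_succ hi).2.2.2,
    fun i hi j hj hij => hp.getVert_injOn hi hj hij⟩, p.getVert_zero, p.getVert_length, ?_⟩
  intro i hi
  cases i with
  | zero => simpa using hv
  | succ i => exact (p.adj_getVert_succ hi).2.2.1

/-- The part of a trail between the indices `i` and `j`. -/
def Trail.segment {V : Type*} {E : V → V → Prop} (T : Trail V E) (i j : ℕ)
    (hij : i ≤ j) (hj : j ≤ T.len) : Trail V E where
  len := j - i
  f k := T.f (i + k)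
  arcs k hk := T.arcs (i + k) (by omega)
  inj k hk l hl h := by
    have := T.inj (i + k) (by omega) (i + l) (by omega) h
    omega

/-- If `K` has local relationships, the nodes of `K` on a trail without converging
connections starting in `K` are all reachable from its first node inside `K`. -/
lemma LocalRel.reachable {V : Type*} {E : V → V → Prop} {K : Set V} (hK : LocalRel E K)
    (T : Trail V E) (h0 : T.f 0 ∈ K) (hT : ∀ i, ¬ T.ConvAt i) (j : ℕ) (hj : j ≤ T.len)
    (hjK : T.f j ∈ K) : (inducedSkeleton E K).Reachable (T.f 0) (T.f j) := by
  induction j using Nat.strong_induction_on with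
  | _ j ih =>
    obtain rfl | hpos := Nat.eq_zero_or_pos j
    · exact SimpleGraph.Reachable.refl _
    let P : ℕ → Prop := fun i => i < j ∧ T.f i ∈ K
    let i := Nat.findGreatest P j
    have hi : P i := Nat.findGreatest_spec (P := P) (Nat.zero_le j) ⟨hpos, h0⟩
    have hmax : ∀ k, i < k → k < j → T.f k ∉ K := fun k hik hkj hk =>
      Nat.findGreatest_is_greatest (P := P) hik hkj.le ⟨hkj, hk⟩
    have hend : i + (j - i) = j := Nat.add_sub_cancel' hi.1.le
    have hadj := hK (T.segment i j hi.1.le hj) (Nat.sub_pos_of_lt hi.1) hi.2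
      (by simpa [Trail.segment, hend] using hjK)
      (fun k hk hk' => hmax _ (by omega) (by simp only [Trail.segment] at hk'; omega))
      (fun k hk hk' hc => by
        obtain ⟨-, -, h1, h2⟩ := hc
        simp only [Trail.segment] at hk' h1 h2
        refine hT (i + k) ⟨by omega, by omega, ?_, h2⟩
        rwa [Nat.add_sub_assoc hk])
    simp only [Trail.segment, hend, Nat.add_zero] at hadj
    refine (ih i hi.1 (hi.1.le.trans hj) hi.2).trans (SimpleGraph.Adj.reachable ?_)
    exact ⟨fun h => hi.1.ne (T.inj i (hi.1.le.trans hj) j hj h), hi.2, hjK, hadj⟩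

/-- If `K` has local relationships, then any two distinct nodes of `K`
are either connected within `K` or d-separated by the empty set. -/
theorem localRel_connected_or_dsep
    {V : Type*} [Fintype V] (E : V → V → Prop) (hdag : IsDAG E) (K : Set V)
    (hK : LocalRel E K) :
    ∀ v1 ∈ K, ∀ v2 ∈ K, v1 ≠ v2 →
      (∃ T : Trail V E, T.f 0 = v1 ∧ T.f T.len = v2 ∧ ∀ i, i ≤ T.len → T.f i ∈ K) ∨
      DSep E {v1} {v2} ∅ := by
  intro v1 hv1 v2 hv2 _
  refine or_iff_not_imp_right.mpr fun hsep => exists_trail_of_reachable hv1 ?_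
  simp only [DSep, not_forall, not_not] at hsep
  obtain ⟨T, rfl, rfl, hact⟩ := hsep
  refine hK.reachable T hv1 (fun i hc => ?_) T.len le_rfl hv2
  simpa using (hact i hc.1 hc.2.1).1 hc
end
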